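/- Let P and L be skew-symmetric 3×3 real matrices and set F := 1 − (1/2)·tr(L·P). If F ≠ 0, then P·(I − L·P)⁻¹ = F⁻¹·P. (This is the coordinate form of the statement that on a 3-dimensional manifold the λ-gauge transformation of a bivector field Π is well defined on the set {F = 1 + ⟨λ,Π⟩ ≠ 0} and there equals (1/F)·Π.) -/

import Mathlib

open Matrix

/-!
Identify skew-symmetric `3 × 3` matrices with cross products, `P = [p]ₓ` and `L = [l]ₓ`. The triple
product expansion is the matrix identity `L * P = p lᵀ - (l ⬝ p) I`. Taking traces, it gives
`F = 1 + l ⬝ p`; multiplying by `P` on the left, where `P p = p × p = 0`, it gives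
`P * L * P = (1 - F) • P`. This last relation alone makes `1 + F⁻¹ • (L * P)` the inverse of
`1 - L * P`.
-/

section Gauge

variable {m n R : Type*} [Fintype m] [Fintype n] [DecidableEq n] [CommRing R]

theorem inv_one_sub_mul_of_mul_mul_eq_smul {P : Matrix m n R} {L : Matrix n m R} {u : Rˣ}
    (h : P * L * P = (1 - u : R) • P) : (1 - L * P)⁻¹ = 1 + u⁻¹ • (L * P) := by
  have hsq : L * P * (L * P) = (1 - u : R) • (L * P) := by
    rw [Matrix.mul_assoc, ← Matrix.mul_assoc P, h, Matrix.mul_smul]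
  refine inv_eq_right_inv ?_
  calc (1 - L * P) * (1 + u⁻¹ • (L * P))
      = 1 - L * P + u⁻¹ • (L * P - L * P * (L * P)) := by
        rw [mul_add, mul_one, mul_smul_comm, sub_mul, one_mul]
    _ = 1 - L * P + u⁻¹ • u • (L * P) := by
        rw [hsq, sub_smul, one_smul, sub_sub_cancel, Units.smul_def u]
    _ = 1 := by rw [inv_smul_smul, sub_add_cancel]

theorem mul_inv_one_sub_mul_of_mul_mul_eq_smul {P : Matrix m n R} {L : Matrix n m R} {u : Rˣ}
    (h : P * L * P = (1 - u : R) • P) : P * (1 - L * P)⁻¹ = u⁻¹ • P := by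
  calc P * (1 - L * P)⁻¹
      = P + u⁻¹ • (P * L * P) := by
        rw [inv_one_sub_mul_of_mul_mul_eq_smul h, Matrix.mul_add, Matrix.mul_one, Matrix.mul_smul,
          Matrix.mul_assoc]
    _ = P + (u⁻¹ • P - u⁻¹ • u • P) := by
        rw [h, sub_smul, one_smul, smul_sub, Units.smul_def u]
    _ = u⁻¹ • P := by rw [inv_smul_smul, add_sub_cancel]

end Gauge

section CrossMatrix

variable {R : Type*} [CommRing R]

/-- The matrix `[v]ₓ` of the linear map `w ↦ v ⨯₃ w`, which encodes a vector as a skew-symmetric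
matrix. -/
def crossMatrix (v : Fin 3 → R) : Matrix (Fin 3) (Fin 3) R :=
  !![0, -v 2, v 1; v 2, 0, -v 0; -v 1, v 0, 0]

theorem crossMatrix_mulVec (v w : Fin 3 → R) : crossMatrix v *ᵥ w = v ⨯₃ w := by
  ext i
  fin_cases i <;> simp [crossMatrix, cross_apply, mulVec_eq_sum, Fin.sum_univ_three] <;> ring

theorem crossMatrix_mulVec_self (v : Fin 3 → R) : crossMatrix v *ᵥ v = 0 := by
  rw [crossMatrix_mulVec, cross_self]

theorem crossMatrix_mul_crossMatrix (v w : Fin 3 → R) :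
    crossMatrix v * crossMatrix w = vecMulVec w v - (v ⬝ᵥ w) • 1 := by
  refine ext_iff_mulVec.mpr fun x ↦ ?_
  rw [← mulVec_mulVec, crossMatrix_mulVec, crossMatrix_mulVec, cross_cross_eq_smul_sub_smul',
    sub_mulVec, vecMulVec_mulVec, smul_mulVec, one_mulVec, op_smul_eq_smul, dotProduct_comm w v]

theorem trace_crossMatrix_mul_crossMatrix (v w : Fin 3 → R) :
    (crossMatrix v * crossMatrix w).trace = -2 * (v ⬝ᵥ w) := by
  rw [crossMatrix_mul_crossMatrix, trace_sub, trace_vecMulVec, trace_smul, trace_one,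
    Fintype.card_fin, dotProduct_comm w v, smul_eq_mul]
  push_cast
  ring

theorem crossMatrix_mul_crossMatrix_mul_self (v w : Fin 3 → R) :
    crossMatrix v * crossMatrix w * crossMatrix v = -(w ⬝ᵥ v) • crossMatrix v := by
  rw [Matrix.mul_assoc, crossMatrix_mul_crossMatrix, Matrix.mul_sub, mul_vecMulVec,
    crossMatrix_mulVec_self, zero_vecMulVec, zero_sub, Matrix.mul_smul, Matrix.mul_one, neg_smul]

end CrossMatrix

section SkewSymmetric

variable {R : Type*}

theorem diag_eq_zero_of_transpose_eq_neg {n : Type*} [Ring R] (h2 : IsLeftRegular (2 : R))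
    {A : Matrix n n R} (hA : Aᵀ = -A) : A.diag = 0 := by
  ext i
  have hi : A i i = -A i i := congrFun₂ hA i i
  refine h2 ?_
  simpa [two_mul] using eq_neg_iff_add_eq_zero.mp hi

theorem exists_eq_crossMatrix [CommRing R] (h2 : IsLeftRegular (2 : R))
    {A : Matrix (Fin 3) (Fin 3) R} (hA : Aᵀ = -A) : ∃ v, A = crossMatrix v := by
  have hdiag (i : Fin 3) : A i i = 0 := congrFun (diag_eq_zero_of_transpose_eq_neg h2 hA) i
  have hskew (i j : Fin 3) : A j i = -A i j := congrFun₂ hA i j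
  refine ⟨![A 2 1, A 0 2, A 1 0], ?_⟩
  ext i j
  fin_cases i <;> fin_cases j <;> simp [crossMatrix, hdiag, ← hskew]

end SkewSymmetric

theorem stmt_3_general {R : Type*} [CommRing R] (h2 : IsLeftRegular (2 : R))
    {P L : Matrix (Fin 3) (Fin 3) R} (hP : Pᵀ = -P) (hL : Lᵀ = -L)
    {F : Rˣ} (hF : 2 * (F : R) = 2 - (L * P).trace) :
    P * (1 - L * P)⁻¹ = F⁻¹ • P := by
  obtain ⟨p, rfl⟩ := exists_eq_crossMatrix h2 hP
  obtain ⟨l, rfl⟩ := exists_eq_crossMatrix h2 hL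
  have hF_dot : (F : R) = 1 + l ⬝ᵥ p := by
    refine h2 (hF.trans ?_)
    rw [trace_crossMatrix_mul_crossMatrix]
    ring
  refine mul_inv_one_sub_mul_of_mul_mul_eq_smul ?_
  rw [crossMatrix_mul_crossMatrix_mul_self, hF_dot, sub_add_cancel_left]

theorem stmt_3 (P L : Matrix (Fin 3) (Fin 3) ℝ)
    (hP : Pᵀ = -P) (hL : Lᵀ = -L)
    (F : ℝ) (hF : F = 1 - (1 / 2) * (L * P).trace) (hF0 : F ≠ 0) :
    P * (1 - L * P)⁻¹ = F⁻¹ • P := by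
  have hF_two : 2 * F = 2 - (L * P).trace := by rw [hF]; ring
  exact stmt_3_general (mul_right_injective₀ two_ne_zero) hP hL (F := Units.mk0 F hF0) hF_two
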